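/- Let G be a subgroup of PL₊(I) generated by a finite set X. If G is soluble, then the derived length of G is at most the cardinality of the set of breakpoints of the elements of X. -/

import Mathlib

open Set

namespace PLPaper

/-- We model `PL₊(I)` inside the group of bijections of `ℝ` with *opposite*
composition, so that the group acts on `ℝ` on the right:
`x · (g * h) = (x · g) · h`. -/
abbrev PermR : Type := (Equiv.Perm ℝ)ᵐᵒᵖ

/-- The (right) action of `g` on the point `x`. -/
def ap (g : PermR) (x : ℝ) : ℝ := g.unop x

/-- `g` is affine on a neighbourhood of `x`. -/
def IsLocallyAffineAt (g : PermR) (x : ℝ) : Prop :=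
  ∃ m b : ℝ, ∀ᶠ y in nhds x, ap g y = m * y + b

/-- The breakpoints of `g`: points of `(0,1)` where `g` is not locally affine
(equivalently, for a PL map, where the derivative fails to exist). -/
def Breakpoints (g : PermR) : Set ℝ :=
  {x ∈ Ioo (0:ℝ) 1 | ¬ IsLocallyAffineAt g x}

/-- `g` is an orientation-preserving piecewise-linear homeomorphism of `[0,1]`
(extended by the identity to all of `ℝ`), with finitely many breakpoints. -/
def IsPL (g : PermR) : Prop :=
  StrictMono (ap g) ∧ (∀ x ∉ Ioo (0:ℝ) 1, ap g x = x) ∧ (Breakpoints g).Finite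

/-- The support of `g`. -/
def Supp (g : PermR) : Set ℝ := {x | ap g x ≠ x}

/-- `(a,b)` is an orbital of `g`, i.e. a connected component of `Supp g`. -/
def IsOrbital (g : PermR) (a b : ℝ) : Prop :=
  a < b ∧ Ioo a b ⊆ Supp g ∧ a ∉ Supp g ∧ b ∉ Supp g

/-- The support of a subgroup `G`. -/
def GSupp (G : Subgroup PermR) : Set ℝ := ⋃ g ∈ (G : Set PermR), Supp g

/-- `(a,b)` is an orbital of the group `G`, i.e. a connected component of its support. -/
def IsGroupOrbital (G : Subgroup PermR) (a b : ℝ) : Prop :=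
  a < b ∧ Ioo a b ⊆ GSupp G ∧ a ∉ GSupp G ∧ b ∉ GSupp G

/-- The pair `g, h` carries a transition chain: orbitals `(a,b)` of `g` and
`(c,d)` of `h` with `a < c < b < d`. -/
def ElemsTransitionChain (g h : PermR) : Prop :=
  ∃ a b c d : ℝ, IsOrbital g a b ∧ IsOrbital h c d ∧ a < c ∧ c < b ∧ b < d

/-- The pair `g, h` carries a one-sided overlap: orbitals `(a,b)` of `g` and
`(a,c)` of `h`, or `(a,b)` of `g` and `(c,b)` of `h`, where `a < c < b`. -/
def ElemsOneSidedOverlap (g h : PermR) : Prop :=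
  ∃ a b c : ℝ, a < c ∧ c < b ∧
    ((IsOrbital g a b ∧ IsOrbital h a c) ∨ (IsOrbital g a b ∧ IsOrbital h c b))

def AdmitsTransitionChain (G : Subgroup PermR) : Prop :=
  ∃ g ∈ G, ∃ h ∈ G, ElemsTransitionChain g h

def AdmitsOneSidedOverlap (G : Subgroup PermR) : Prop :=
  ∃ g ∈ G, ∃ h ∈ G, ElemsOneSidedOverlap g h

/-- `G` admits a bad overlap: orbitals `A` of `f ∈ G` and `B` of `g ∈ G` which
intersect, are distinct, and neither closure is contained in the other orbital. -/
def AdmitsBadOverlap (G : Subgroup PermR) : Prop :=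
  ∃ f ∈ G, ∃ g ∈ G, ∃ a b c d : ℝ, IsOrbital f a b ∧ IsOrbital g c d ∧
    (Ioo a b ∩ Ioo c d).Nonempty ∧ Ioo a b ≠ Ioo c d ∧
    ¬ Icc a b ⊆ Ioo c d ∧ ¬ Icc c d ⊆ Ioo a b

/-- A tower: a set of signed orbitals `((a,b), g)` with pairwise nested orbitals,
where equal orbitals force equal signatures. -/
def IsTower (T : Set ((ℝ × ℝ) × PermR)) : Prop :=
  (∀ p ∈ T, IsOrbital p.2 p.1.1 p.1.2) ∧
  (∀ p ∈ T, ∀ q ∈ T,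
      Ioo p.1.1 p.1.2 ⊆ Ioo q.1.1 q.1.2 ∨ Ioo q.1.1 q.1.2 ⊆ Ioo p.1.1 p.1.2) ∧
  (∀ p ∈ T, ∀ q ∈ T, p.1 = q.1 → p.2 = q.2)

/-- `G` admits the tower `T` if `T` is a tower all of whose signatures lie in `G`. -/
def AdmitsTower (G : Subgroup PermR) (T : Set ((ℝ × ℝ) × PermR)) : Prop :=
  IsTower T ∧ ∀ p ∈ T, p.2 ∈ G

def AdmitsInfiniteTower (G : Subgroup PermR) : Prop :=
  ∃ T : Set ((ℝ × ℝ) × PermR), AdmitsTower G T ∧ T.Infinite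

/-- The set of breakpoints of the elements of a set `S`. -/
def BreakSet (S : Set PermR) : Set ℝ := ⋃ g ∈ S, Breakpoints g

/-- The derived length of a group: the least `n` with `derivedSeries G n = ⊥`. -/
noncomputable def derivedLength (G : Type*) [Group G] : ℕ :=
  sInf {n : ℕ | derivedSeries G n = ⊥}

open scoped commutatorElement

/-! ### The action -/

theorem ap_mul (g h : PermR) (x : ℝ) : ap (g * h) x = ap h (ap g x) := rfl

theorem ap_one (x : ℝ) : ap 1 x = x := rfl

theorem ap_inv_ap (g : PermR) (x : ℝ) : ap g⁻¹ (ap g x) = x := by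
  rw [← ap_mul, mul_inv_cancel, ap_one]

theorem ap_ap_inv (g : PermR) (x : ℝ) : ap g (ap g⁻¹ x) = x := by
  rw [← ap_mul, inv_mul_cancel, ap_one]

theorem ap_ext {g h : PermR} (H : ∀ x, ap g x = ap h x) : g = h :=
  MulOpposite.unop_injective (Equiv.ext H)

theorem ap_inj (g : PermR) {x y : ℝ} (h : ap g x = ap g y) : x = y := by
  rw [← ap_inv_ap g x, h, ap_inv_ap]

theorem ap_inv_fix {g : PermR} {x : ℝ} (h : ap g x = x) : ap g⁻¹ x = x := by
  conv_lhs => rw [← h]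
  exact ap_inv_ap g x

theorem ap_continuous {g : PermR} (h : StrictMono (ap g)) : Continuous (ap g) := by
  have hs : Function.Surjective (ap g) := fun y => ⟨ap g⁻¹ y, ap_ap_inv g y⟩
  exact h.monotone.continuous_of_surjective hs

theorem ap_lt_of {g : PermR} (h : StrictMono (ap g)) {a b y : ℝ} (ha : ap g a = a)
    (hb : ap g b = b) (hy : y ∈ Ioo a b) : ap g y ∈ Ioo a b :=
  ⟨by simpa [ha] using h hy.1, by simpa [hb] using h hy.2⟩

/-! ### Derived series inside `PermR` -/

/-- The derived series of a subgroup. -/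
def D (H : Subgroup PermR) : ℕ → Subgroup PermR
  | 0 => H
  | n + 1 => ⁅D H n, D H n⁆

theorem D_succ_le (H : Subgroup PermR) (n : ℕ) : D H (n + 1) ≤ D H n := by
  refine Subgroup.commutator_le.2 fun x hx y hy => ?_
  exact (D H n).mul_mem ((D H n).mul_mem ((D H n).mul_mem hx hy) ((D H n).inv_mem hx))
    ((D H n).inv_mem hy)

theorem D_le (H : Subgroup PermR) (n : ℕ) : D H n ≤ H := by
  induction n with
  | zero => exact le_rfl
  | succ n ih => exact (D_succ_le H n).trans ih

theorem D_succ_le_comm (H : Subgroup PermR) (n : ℕ) : D H (n + 1) ≤ ⁅H, H⁆ :=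
  Subgroup.commutator_mono (D_le H n) (D_le H n)

theorem D_mono {K H : Subgroup PermR} (h : K ≤ H) (n : ℕ) : D K n ≤ D H n := by
  induction n with
  | zero => exact h
  | succ n ih => exact Subgroup.commutator_mono ih ih

theorem D_shift {K H : Subgroup PermR} (h : ⁅H, H⁆ ≤ K) (n : ℕ) : D H (n + 1) ≤ D K n := by
  induction n with
  | zero => exact h
  | succ n ih => exact Subgroup.commutator_mono ih ih

theorem map_derivedSeries_eq_D (G : Subgroup PermR) (n : ℕ) :
    (derivedSeries G n).map G.subtype = D G n := by
  induction n with
  | zero => simp [D, ← MonoidHom.range_eq_map]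
  | succ n ih => rw [derivedSeries_succ, Subgroup.map_commutator, ih]; rfl

/-! ### Breakpoints of products -/

theorem locAff_one (x : ℝ) : IsLocallyAffineAt 1 x :=
  ⟨1, 0, Filter.Eventually.of_forall fun y => by rw [ap_one]; ring⟩

theorem locAff_mul {g h : PermR} (hg : StrictMono (ap g)) {x : ℝ} (h1 : IsLocallyAffineAt g x)
    (h2 : IsLocallyAffineAt h (ap g x)) : IsLocallyAffineAt (g * h) x := by
  obtain ⟨m, b, h1⟩ := h1
  obtain ⟨m', b', h2⟩ := h2
  refine ⟨m' * m, m' * b + b', ?_⟩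
  filter_upwards [h1, (ap_continuous hg).continuousAt.eventually h2] with y e1 e2
  rw [ap_mul, e2, e1]; ring

theorem locAff_inv {g : PermR} (hg : StrictMono (ap g)) (hg' : StrictMono (ap g⁻¹)) {x : ℝ}
    (h1 : IsLocallyAffineAt g (ap g⁻¹ x)) : IsLocallyAffineAt g⁻¹ x := by
  obtain ⟨m, b, h1⟩ := h1
  have hm : m ≠ 0 := by
    rintro rfl
    have h2 := h1.self_of_nhds
    obtain ⟨ε, hε, h3⟩ := Metric.eventually_nhds_iff.1 h1
    have h4 := @h3 (ap g⁻¹ x + ε / 2) (by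
      rw [Real.dist_eq, add_sub_cancel_left, abs_of_pos (by linarith)]
      linarith)
    have h5 : ap g (ap g⁻¹ x + ε / 2) = ap g (ap g⁻¹ x) := by rw [h4, h2]; ring
    have := ap_inj g h5
    linarith
  refine ⟨m⁻¹, - m⁻¹ * b, ?_⟩
  filter_upwards [(ap_continuous hg').continuousAt.eventually h1] with y e1
  rw [ap_ap_inv] at e1
  field_simp
  linarith

theorem break_closure (X : Set PermR) (hPL : ∀ g ∈ Subgroup.closure X, IsPL g) (g : PermR)
    (hg : g ∈ Subgroup.closure X) :
    ∀ z ∈ Breakpoints g, ∃ s ∈ BreakSet X, ∃ h ∈ Subgroup.closure X, z = ap h s := by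
  induction hg using Subgroup.closure_induction with
  | mem x hx =>
    intro z hz
    exact ⟨z, mem_biUnion hx hz, 1, Subgroup.one_mem _, rfl⟩
  | one => intro z hz; exact absurd (locAff_one z) hz.2
  | mul x y hx hy ihx ihy =>
    intro z hz
    by_cases h1 : IsLocallyAffineAt x z
    · have h2 : ¬ IsLocallyAffineAt y (ap x z) := fun h2 =>
        hz.2 (locAff_mul (hPL x hx).1 h1 h2)
      have h3 : ap x z ∈ Ioo (0:ℝ) 1 := ap_lt_of (hPL x hx).1
        ((hPL x hx).2.1 0 (by simp)) ((hPL x hx).2.1 1 (by simp)) hz.1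
      obtain ⟨s, hs, h, hh, e⟩ := ihy _ ⟨h3, h2⟩
      refine ⟨s, hs, h * x⁻¹, Subgroup.mul_mem _ hh (Subgroup.inv_mem _ hx), ?_⟩
      rw [ap_mul, ← e, ap_inv_ap]
    · exact ihx z ⟨hz.1, h1⟩
  | inv x hx ih =>
    intro z hz
    have hx' := Subgroup.inv_mem _ hx
    have h2 : ¬ IsLocallyAffineAt x (ap x⁻¹ z) := fun h2 =>
        hz.2 (locAff_inv (hPL x hx).1 (hPL _ hx').1 h2)
    have h3 : ap x⁻¹ z ∈ Ioo (0:ℝ) 1 := ap_lt_of (hPL _ hx').1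
        ((hPL _ hx').2.1 0 (by simp)) ((hPL _ hx').2.1 1 (by simp)) hz.1
    obtain ⟨s, hs, h, hh, e⟩ := ih _ ⟨h3, h2⟩
    refine ⟨s, hs, h * x, Subgroup.mul_mem _ hh hx, ?_⟩
    rw [ap_mul, ← e, ap_ap_inv]

/-! ### Affine pieces -/

theorem affine_on {g : PermR} {p q : ℝ} (hloc : ∀ y ∈ Ioo p q, IsLocallyAffineAt g y) :
    ∃ m b : ℝ, ∀ y ∈ Ioo p q, ap g y = m * y + b := by
  rcases (Ioo p q).eq_empty_or_nonempty with he | ⟨x₀, hx₀⟩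
  · exact ⟨0, 0, by simp [he]⟩
  have key : ∀ y ∈ Ioo p q, ∃ m : ℝ, HasDerivAt (ap g) m y ∧ deriv (ap g) =ᶠ[nhds y] fun _ => m := by
    intro y hy
    obtain ⟨m, b, h⟩ := hloc y hy
    have hd : ∀ z, HasDerivAt (fun y => m * y + b) m z := fun z => by
      simpa using ((hasDerivAt_id z).const_mul m).add_const b
    refine ⟨m, (hd y).congr_of_eventuallyEq h, ?_⟩
    filter_upwards [h.eventually_nhds] with z hz
    exact ((hd z).congr_of_eventuallyEq hz).deriv
  have hc : ∀ y ∈ Ioo p q, deriv (ap g) y = deriv (ap g) x₀ := by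
    intro y hy
    refine isOpen_Ioo.is_const_of_deriv_eq_zero isPreconnected_Ioo (f := deriv (ap g)) ?_ ?_ hy hx₀
    · intro z hz
      obtain ⟨m, -, h⟩ := key z hz
      exact ((hasDerivAt_const z m).congr_of_eventuallyEq h).differentiableAt.differentiableWithinAt
    · intro z hz
      obtain ⟨m, -, h⟩ := key z hz
      exact ((hasDerivAt_const z m).congr_of_eventuallyEq h).deriv
  set m := deriv (ap g) x₀
  have hd : ∀ z ∈ Ioo p q, HasDerivAt (fun y => ap g y - m * y) 0 z := by
    intro z hz
    obtain ⟨m', h, -⟩ := key z hz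
    have : m' = m := by rw [← hc z hz, h.deriv]
    rw [this] at h
    have h6 := h.fun_sub ((hasDerivAt_id z).const_mul m)
    have e6 : m - m * 1 = 0 := by ring
    rw [e6] at h6
    exact h6
  refine ⟨m, ap g x₀ - m * x₀, fun y hy => ?_⟩
  have := isOpen_Ioo.is_const_of_deriv_eq_zero isPreconnected_Ioo (f := fun y => ap g y - m * y)
    (fun z hz => (hd z hz).differentiableAt.differentiableWithinAt) (fun z hz => (hd z hz).deriv)
    hy hx₀
  linarith [this]

theorem affine_on_closed {g : PermR} (hg : IsPL g) {p q : ℝ} (h0 : 0 ≤ p) (h1 : q ≤ 1)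
    (hpq : p < q) (hb : ∀ y ∈ Ioo p q, y ∉ Breakpoints g) :
    ∃ m b : ℝ, ∀ y ∈ Icc p q, ap g y = m * y + b := by
  obtain ⟨m, b, h⟩ := affine_on (g := g) (p := p) (q := q) (by
    intro y hy
    by_contra hn
    exact hb y hy ⟨⟨h0.trans_lt hy.1, hy.2.trans_le h1⟩, hn⟩)
  refine ⟨m, b, ?_⟩
  have hcl : Icc p q ⊆ closure (Ioo p q) := by rw [closure_Ioo hpq.ne]
  intro y hy
  exact (isClosed_eq (ap_continuous hg.1) (by fun_prop : Continuous fun y : ℝ => m * y + b)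
    ).closure_subset_iff.2 (fun z hz => h z hz) (hcl hy)

/-- A PL map fixing both ends of an interval and without breakpoints inside is trivial there. -/
theorem no_break {g : PermR} (hg : IsPL g) {p q : ℝ} (h0 : 0 ≤ p) (h1 : q ≤ 1)
    (hpq : p < q) (hb : ∀ y ∈ Ioo p q, y ∉ Breakpoints g) (hp : ap g p = p) (hq : ap g q = q) :
    ∀ y ∈ Ioo p q, ap g y = y := by
  obtain ⟨m, b, h⟩ := affine_on_closed hg h0 h1 hpq hb
  have e1 := h p ⟨le_rfl, hpq.le⟩
  have e2 := h q ⟨hpq.le, le_rfl⟩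
  rw [hp] at e1
  rw [hq] at e2
  have hm : m = 1 := by
    have : (m - 1) * (q - p) = 0 := by linarith
    rcases mul_eq_zero.1 this with h | h <;> linarith
  subst hm
  intro y hy
  rw [h y ⟨hy.1.le, hy.2.le⟩]
  linarith

open Filter Topology

/-- affine germ along the filter `l` at the point `t` -/
def Germ (g : PermR) (l : Filter ℝ) (t : ℝ) : Prop :=
  ∃ m : ℝ, ∀ᶠ y in l, ap g y = t + m * (y - t)

theorem germ_right {g : PermR} (hg : IsPL g) {t : ℝ} (h0 : 0 ≤ t) (h1 : t < 1)
    (ht : ap g t = t) : Germ g (𝓝[>] t) t := by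
  have hfin : (Breakpoints g \ {t}).Finite := hg.2.2.subset sdiff_subset
  have hU : (Breakpoints g \ {t})ᶜ ∈ 𝓝 t := hfin.isClosed.isOpen_compl.mem_nhds (by simp)
  obtain ⟨ε, hε, h⟩ := Metric.mem_nhds_iff.1 hU
  obtain ⟨m, b, hm⟩ := affine_on_closed hg (p := t) (q := min (t + ε) 1) h0 (min_le_right _ _)
    (lt_min (by linarith) h1) (by
      intro y hy hyb
      have hy2 := hy.2.trans_le (min_le_left _ _)
      refine h (a := y) ?_ ⟨hyb, by simpa using hy.1.ne'⟩
      rw [Metric.mem_ball, Real.dist_eq, abs_lt]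
      constructor <;> linarith [hy.1])
  have e1 := hm t ⟨le_rfl, (lt_min (by linarith) h1).le⟩
  rw [ht] at e1
  refine ⟨m, ?_⟩
  filter_upwards [Ioo_mem_nhdsGT (lt_min (by linarith) h1 : t < min (t + ε) 1)] with y hy
  rw [hm y ⟨hy.1.le, hy.2.le⟩]
  linarith

theorem germ_left {g : PermR} (hg : IsPL g) {t : ℝ} (h0 : 0 < t) (h1 : t ≤ 1)
    (ht : ap g t = t) : Germ g (𝓝[<] t) t := by
  have hfin : (Breakpoints g \ {t}).Finite := hg.2.2.subset sdiff_subset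
  have hU : (Breakpoints g \ {t})ᶜ ∈ 𝓝 t := hfin.isClosed.isOpen_compl.mem_nhds (by simp)
  obtain ⟨ε, hε, h⟩ := Metric.mem_nhds_iff.1 hU
  have hlt : max (t - ε) 0 < t := max_lt (by linarith) h0
  obtain ⟨m, b, hm⟩ := affine_on_closed hg (p := max (t - ε) 0) (q := t) (le_max_right _ _) h1
    hlt (by
      intro y hy hyb
      have hy2 := (le_max_left _ _).trans_lt hy.1
      refine h (a := y) ?_ ⟨hyb, by simpa using hy.2.ne⟩
      rw [Metric.mem_ball, Real.dist_eq, abs_lt]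
      constructor <;> linarith [hy.2])
  have e1 := hm t ⟨hlt.le, le_rfl⟩
  rw [ht] at e1
  refine ⟨m, ?_⟩
  filter_upwards [Ioo_mem_nhdsLT hlt] with y hy
  rw [hm y ⟨hy.1.le, hy.2.le⟩]
  linarith

theorem germ_dichotomy {g : PermR} {l : Filter ℝ} {t : ℝ} (h : Germ g l t) (hl : ∀ᶠ y in l, y ≠ t) :
    (∀ᶠ y in l, ap g y = y) ∨ (∀ᶠ y in l, ap g y ≠ y) := by
  obtain ⟨m, h⟩ := h
  by_cases hm : m = 1
  · left
    filter_upwards [h] with y hy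
    rw [hy, hm]; ring
  · right
    filter_upwards [h, hl] with y hy hyt e
    rw [hy] at e
    have : (m - 1) * (y - t) = 0 := by linarith
    rcases mul_eq_zero.1 this with h | h
    · exact hm (by linarith)
    · exact hyt (by linarith)

theorem tendsto_right {g : PermR} (hg : StrictMono (ap g)) {t : ℝ} (ht : ap g t = t) :
    Tendsto (ap g) (𝓝[>] t) (𝓝[>] t) := by
  refine tendsto_nhdsWithin_iff.2 ⟨?_, ?_⟩
  · have := (ap_continuous hg).tendsto t
    rw [ht] at this
    exact this.mono_left nhdsWithin_le_nhds
  · filter_upwards [self_mem_nhdsWithin] with y hy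
    have := hg hy
    rwa [ht] at this

theorem tendsto_left {g : PermR} (hg : StrictMono (ap g)) {t : ℝ} (ht : ap g t = t) :
    Tendsto (ap g) (𝓝[<] t) (𝓝[<] t) := by
  refine tendsto_nhdsWithin_iff.2 ⟨?_, ?_⟩
  · have := (ap_continuous hg).tendsto t
    rw [ht] at this
    exact this.mono_left nhdsWithin_le_nhds
  · filter_upwards [self_mem_nhdsWithin] with y hy
    have := hg hy
    rwa [ht] at this

/-- Commutators have trivial germs. -/
theorem comm_trivial (H : Subgroup PermR) (l : Filter ℝ) (t : ℝ)
    (hgerm : ∀ h ∈ H, Germ h l t) (htend : ∀ h ∈ H, Tendsto (ap h) l l) :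
    ∀ g ∈ ⁅H, H⁆, ∀ᶠ y in l, ap g y = y := by
  have hsub : ∀ g ∈ ⁅H, H⁆, Tendsto (ap g) l l ∧ ∀ᶠ y in l, ap g y = y := by
    intro g hg
    rw [Subgroup.commutator_def] at hg
    induction hg using Subgroup.closure_induction with
    | mem x hx =>
      obtain ⟨f, hf, g, hg, rfl⟩ := hx
      have hmem : ⁅f, g⁆ ∈ H := H.mul_mem (H.mul_mem (H.mul_mem hf hg) (H.inv_mem hf)) (H.inv_mem hg)
      refine ⟨htend _ hmem, ?_⟩
      obtain ⟨m, hm⟩ := hgerm f hf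
      obtain ⟨n, hn⟩ := hgerm g hg
      filter_upwards [hm, hn, (htend f hf).eventually hn, (htend g hg).eventually hm]
        with y e1 e2 e3 e4
      have : ap (f * g) y = ap (g * f) y := by
        rw [ap_mul, ap_mul, e3, e4, e1, e2]; ring
      have e5 : ⁅f, g⁆ = (f * g) * (g * f)⁻¹ := by rw [commutatorElement_def]; group
      rw [e5, ap_mul, this, ap_inv_ap]
    | one => exact ⟨tendsto_id, Eventually.of_forall ap_one⟩
    | mul x y hx hy ihx ihy =>
      refine ⟨ihy.1.comp ihx.1, ?_⟩
      filter_upwards [ihx.2, ihx.1.eventually ihy.2] with z e1 e2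
      rw [ap_mul, e2, e1]
    | inv x hx ih =>
      have : ∀ᶠ y in l, ap x⁻¹ y = y := by
        filter_upwards [ih.2] with z e1
        exact ap_inv_fix e1
      exact ⟨Tendsto.congr' (f₁ := id) (by filter_upwards [this] with z e; exact e.symm) tendsto_id, this⟩
  exact fun g hg => (hsub g hg).2

/-! ### Orbits and orbitals -/

theorem fix_lub {g : PermR} (hg : StrictMono (ap g)) {S : Set ℝ} {q : ℝ} (hq : IsLUB S q)
    (h1 : ∀ s ∈ S, ap g s ∈ S) (h2 : ∀ s ∈ S, ap g⁻¹ s ∈ S) : ap g q = q := by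
  apply le_antisymm
  · have : q ≤ ap g⁻¹ q := hq.2 (fun s hs => by
      have := hq.1 (h1 s hs)
      rw [← ap_ap_inv g q] at this
      exact hg.le_iff_le.1 this)
    have := hg.monotone this
    rwa [ap_ap_inv] at this
  · refine hq.2 fun s hs => ?_
    have := hg.monotone (hq.1 (h2 s hs))
    rwa [ap_ap_inv] at this

/-- Orbits of a group without fixed points accumulate at the left end. -/
theorem orbit_left (H : Subgroup PermR) (hm : ∀ h ∈ H, StrictMono (ap h)) {a b : ℝ}
    (ha : ∀ h ∈ H, ap h a = a) (hb : ∀ h ∈ H, ap h b = b)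
    (hno : ∀ y ∈ Ioo a b, ∃ h ∈ H, ap h y ≠ y) {x : ℝ} (hx : x ∈ Ioo a b) :
    ∀ y ∈ Ioo a b, ∃ h ∈ H, ap h x ∈ Ioo a y := by
  intro y hy
  by_contra hcon
  push Not at hcon
  set O : Set ℝ := {z | ∃ h ∈ H, z = ap h x} with hO
  have hlow : ∀ z ∈ O, y ≤ z := by
    rintro z ⟨h, hh, rfl⟩
    by_contra hlt
    exact hcon h hh ⟨(ap_lt_of (hm h hh) (ha h hh) (hb h hh) hx).1, not_le.1 hlt⟩
  have hxO : x ∈ O := ⟨1, H.one_mem, rfl⟩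
  have hglb : IsGLB O (sInf O) := Real.isGLB_sInf ⟨x, hxO⟩ ⟨y, hlow⟩
  set i := sInf O
  have hi : i ∈ Ioo a b := ⟨hy.1.trans_le (hglb.2 hlow), (hglb.1 hxO).trans_lt hx.2⟩
  have hle : ∀ h ∈ H, i ≤ ap h i := by
    intro h hh
    have : ap h⁻¹ i ≤ i := hglb.2 (by
      rintro z ⟨k, hk, rfl⟩
      have h1 := hglb.1 (show ap (k * h) x ∈ O from ⟨_, H.mul_mem hk hh, rfl⟩)
      have := (hm _ (H.inv_mem hh)).monotone h1
      rwa [ap_mul, ap_inv_ap] at this)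
    have := (hm h hh).monotone this
    rwa [ap_ap_inv] at this
  obtain ⟨h, hh, hne⟩ := hno i hi
  have h1 := hle h hh
  have h2 := (hm h hh).monotone (hle _ (H.inv_mem hh))
  rw [ap_ap_inv] at h2
  exact hne (le_antisymm h2 h1)

theorem orbit_right (H : Subgroup PermR) (hm : ∀ h ∈ H, StrictMono (ap h)) {a b : ℝ}
    (ha : ∀ h ∈ H, ap h a = a) (hb : ∀ h ∈ H, ap h b = b)
    (hno : ∀ y ∈ Ioo a b, ∃ h ∈ H, ap h y ≠ y) {x : ℝ} (hx : x ∈ Ioo a b) :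
    ∀ y ∈ Ioo a b, ∃ h ∈ H, ap h x ∈ Ioo y b := by
  intro y hy
  by_contra hcon
  push Not at hcon
  set O : Set ℝ := {z | ∃ h ∈ H, z = ap h x} with hO
  have hup : ∀ z ∈ O, z ≤ y := by
    rintro z ⟨h, hh, rfl⟩
    by_contra hlt
    exact hcon h hh ⟨not_le.1 hlt, (ap_lt_of (hm h hh) (ha h hh) (hb h hh) hx).2⟩
  have hxO : x ∈ O := ⟨1, H.one_mem, rfl⟩
  have hlub : IsLUB O (sSup O) := Real.isLUB_sSup ⟨x, hxO⟩ ⟨y, hup⟩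
  have hi : sSup O ∈ Ioo a b := ⟨hx.1.trans_le (hlub.1 hxO), (hlub.2 hup).trans_lt hy.2⟩
  obtain ⟨h, hh, hne⟩ := hno _ hi
  have aux : ∀ h ∈ H, ∀ s ∈ O, ap h s ∈ O := by
    rintro h hh s ⟨k, hk, rfl⟩
    exact ⟨k * h, H.mul_mem hk hh, rfl⟩
  exact hne (fix_lub (hm h hh) hlub (aux h hh) (aux _ (H.inv_mem hh)))

theorem orbit_freq_left (H : Subgroup PermR) (hm : ∀ h ∈ H, StrictMono (ap h)) {a b : ℝ}
    (ha : ∀ h ∈ H, ap h a = a) (hb : ∀ h ∈ H, ap h b = b)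
    (hno : ∀ y ∈ Ioo a b, ∃ h ∈ H, ap h y ≠ y) {x : ℝ} (hx : x ∈ Ioo a b) {P : ℝ → Prop}
    (hP : ∀ h ∈ H, P (ap h x)) : ∃ᶠ y in 𝓝[>] a, P y := by
  intro hev
  obtain ⟨u, hu, hsub⟩ := (mem_nhdsGT_iff_exists_Ioo_subset).1 hev
  have hlt : a < min u x := lt_min hu hx.1
  obtain ⟨h, hh, h1⟩ := orbit_left H hm ha hb hno hx ((a + min u x) / 2)
    ⟨by linarith, by linarith [min_le_right u x, hx.2]⟩
  exact hsub ⟨h1.1, by linarith [min_le_left u x, h1.2]⟩ (hP h hh)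

theorem orbit_freq_right (H : Subgroup PermR) (hm : ∀ h ∈ H, StrictMono (ap h)) {a b : ℝ}
    (ha : ∀ h ∈ H, ap h a = a) (hb : ∀ h ∈ H, ap h b = b)
    (hno : ∀ y ∈ Ioo a b, ∃ h ∈ H, ap h y ≠ y) {x : ℝ} (hx : x ∈ Ioo a b) {P : ℝ → Prop}
    (hP : ∀ h ∈ H, P (ap h x)) : ∃ᶠ y in 𝓝[<] b, P y := by
  intro hev
  obtain ⟨u, hu, hsub⟩ := (mem_nhdsLT_iff_exists_Ioo_subset).1 hev
  have hlt : max u x < b := max_lt hu hx.2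
  obtain ⟨h, hh, h1⟩ := orbit_right H hm ha hb hno hx ((b + max u x) / 2)
    ⟨by linarith [le_max_right u x, hx.1], by linarith⟩
  exact hsub ⟨by linarith [le_max_left u x, h1.1], h1.2⟩ (hP h hh)

/-- The orbital of a moved point. -/
theorem exists_orbital (S : Set PermR) (hPL : ∀ g ∈ S, IsPL g) {x : ℝ}
    (hx : ∃ g ∈ S, ap g x ≠ x) :
    ∃ p q : ℝ, 0 ≤ p ∧ q ≤ 1 ∧ x ∈ Ioo p q ∧ (∀ g ∈ S, ap g p = p) ∧ (∀ g ∈ S, ap g q = q) ∧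
      ∀ y ∈ Ioo p q, ∃ g ∈ S, ap g y ≠ y := by
  obtain ⟨g₀, hg₀, hne⟩ := hx
  have hx01 : x ∈ Ioo (0:ℝ) 1 := by
    by_contra h
    exact hne ((hPL g₀ hg₀).2.1 x h)
  set F : Set ℝ := {y | ∀ g ∈ S, ap g y = y} with hF
  have hFc : IsClosed F := by
    have : F = ⋂ g ∈ S, {y | ap g y = y} := by ext y; simp [hF]
    rw [this]
    exact isClosed_biInter fun g hg => isClosed_eq (ap_continuous (hPL g hg).1) continuous_id
  have h0 : (0:ℝ) ∈ F := fun g hg => (hPL g hg).2.1 0 (by simp)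
  have h1 : (1:ℝ) ∈ F := fun g hg => (hPL g hg).2.1 1 (by simp)
  have hxF : x ∉ F := fun h => hne (h g₀ hg₀)
  have n1 : (F ∩ Iic x).Nonempty := ⟨0, h0, hx01.1.le⟩
  have n2 : (F ∩ Ici x).Nonempty := ⟨1, h1, hx01.2.le⟩
  have b1 : BddAbove (F ∩ Iic x) := ⟨x, fun y hy => hy.2⟩
  have b2 : BddBelow (F ∩ Ici x) := ⟨x, fun y hy => hy.2⟩
  have m1 := (hFc.inter isClosed_Iic).csSup_mem n1 b1
  have m2 := (hFc.inter isClosed_Ici).csInf_mem n2 b2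
  refine ⟨sSup (F ∩ Iic x), sInf (F ∩ Ici x), le_csSup b1 ⟨h0, hx01.1.le⟩,
    csInf_le b2 ⟨h1, hx01.2.le⟩, ⟨?_, ?_⟩, m1.1, m2.1, ?_⟩
  · exact lt_of_le_of_ne m1.2 fun h => hxF (h ▸ m1.1)
  · exact lt_of_le_of_ne m2.2 fun h => hxF (by rw [h]; exact m2.1)
  · intro y hy
    by_contra hcon
    push Not at hcon
    rcases le_total y x with h | h
    · exact absurd (le_csSup b1 ⟨hcon, h⟩) (not_le.2 hy.1)
    · exact absurd (csInf_le b2 ⟨hcon, h⟩) (not_le.2 hy.2)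

/-- If the commutator subgroup fixes `x`, the action on `x` is commutative. -/
theorem comm_at (M : Subgroup PermR) {x : ℝ} (hx : ∀ g ∈ ⁅M, M⁆, ap g x = x) {m m' : PermR}
    (hm : m ∈ M) (hm' : m' ∈ M) : ap m (ap m' x) = ap m' (ap m x) := by
  have hc := hx _ (Subgroup.commutator_mem_commutator hm' hm)
  have e : m' * m = ⁅m', m⁆ * (m * m') := by rw [commutatorElement_def]; group
  rw [← ap_mul, ← ap_mul, e, ap_mul, hc]

theorem ne_nhdsGT (a : ℝ) : ∀ᶠ y in 𝓝[>] a, y ≠ a := by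
  filter_upwards [self_mem_nhdsWithin] with y hy
  exact ne_of_gt hy

theorem ne_nhdsLT (a : ℝ) : ∀ᶠ y in 𝓝[<] a, y ≠ a := by
  filter_upwards [self_mem_nhdsWithin] with y hy
  exact ne_of_lt hy

/-- Key lemma: the structure of a soluble group on one of its orbitals. -/
theorem key_lemma (H : Subgroup PermR) (hPL : ∀ h ∈ H, IsPL h) (hsol : ∃ n, D H n = ⊥)
    {a b : ℝ} (h0 : 0 ≤ a) (hab : a < b) (h1 : b ≤ 1)
    (ha : ∀ h ∈ H, ap h a = a) (hb : ∀ h ∈ H, ap h b = b)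
    (hno : ∀ y ∈ Ioo a b, ∃ h ∈ H, ap h y ≠ y) :
    ∃ K : Subgroup PermR, K ≤ H ∧ ⁅H, H⁆ ≤ K ∧ (∃ f ∈ H, f ∉ K) ∧
      (∀ h ∈ H, h ∉ K → ∀ y ∈ Ioo a b, ap h y ≠ y) ∧
      (∀ y ∈ Ioo a b, ∃ o ∈ Ioo a y, ∀ k ∈ K, ap k o = o) ∧
      (∀ y ∈ Ioo a b, ∃ o ∈ Ioo y b, ∀ k ∈ K, ap k o = o) ∧
      (∀ k ∈ K, ∀ᶠ y in 𝓝[<] b, ap k y = y) := by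
  classical
  have hm : ∀ h ∈ H, StrictMono (ap h) := fun h hh => (hPL h hh).1
  have hgR : ∀ h ∈ H, Germ h (𝓝[>] a) a := fun h hh =>
    germ_right (hPL h hh) h0 (hab.trans_le h1) (ha h hh)
  have hgL : ∀ h ∈ H, Germ h (𝓝[<] b) b := fun h hh =>
    germ_left (hPL h hh) (h0.trans_lt hab) h1 (hb h hh)
  have hP : ∃ n, ∃ x ∈ Ioo a b, ∀ g ∈ D H n, ap g x = x := by
    obtain ⟨n, hn⟩ := hsol
    refine ⟨n, (a + b) / 2, ⟨by linarith, by linarith⟩, ?_⟩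
    intro g hg
    rw [hn, Subgroup.mem_bot] at hg
    rw [hg, ap_one]
  -- the commutator subgroup has a fixed point
  have hfix : ∃ x ∈ Ioo a b, ∀ g ∈ ⁅H, H⁆, ap g x = x := by
    obtain ⟨x, hx, hfx⟩ := Nat.find_spec hP
    have hmin := fun m hm => Nat.find_min hP (m := m) hm
    rcases hn : Nat.find hP with _ | i
    · rw [hn] at hfx
      obtain ⟨h, hh, hne⟩ := hno x hx
      exact absurd (hfx h hh) hne
    rw [hn] at hfx
    rcases i with _ | i
    · exact ⟨x, hx, hfx⟩
    exfalso
    have hnf := hmin (i + 1) (by omega)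
    push Not at hnf
    have hMH := D_le H (i + 1)
    obtain ⟨m, hmM, hmx⟩ := hnf x hx
    have ht := comm_trivial H (𝓝[>] a) a hgR (fun h hh => tendsto_right (hm h hh) (ha h hh)) m
      (D_succ_le_comm H i hmM)
    have hfr := orbit_freq_left (D H (i + 1)) (fun h hh => hm h (hMH hh))
      (fun h hh => ha h (hMH hh)) (fun h hh => hb h (hMH hh)) hnf hx
      (P := fun y => ap m y ≠ y) (by
        intro m' hm' e
        rw [comm_at _ hfx hmM hm'] at e
        exact hmx (ap_inj _ e))
    exact hfr (by filter_upwards [ht] with y hy; simpa using hy)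
  obtain ⟨o, ho, hfo⟩ := hfix
  -- elements fixing a point fixed by the commutator subgroup
  have hfixorb : ∀ x ∈ Ioo a b, (∀ g ∈ ⁅H, H⁆, ap g x = x) → ∀ h ∈ H, ap h x = x →
      ∀ k ∈ H, ap h (ap k x) = ap k x := by
    intro x hx hfx h hh e k hk
    rw [comm_at H hfx hh hk, e]
  have hcH : ⁅H, H⁆ ≤ H := D_succ_le H 0
  refine ⟨{ carrier := {h | h ∈ H ∧ ap h o = o}
            mul_mem' := fun {x y} hx hy => ⟨H.mul_mem hx.1 hy.1, by rw [ap_mul, hx.2, hy.2]⟩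
            one_mem' := ⟨H.one_mem, rfl⟩
            inv_mem' := fun {x} hx => ⟨H.inv_mem hx.1, ap_inv_fix hx.2⟩ }, ?_, ?_, ?_, ?_, ?_, ?_, ?_⟩
  · exact fun h hh => hh.1
  · exact fun h hh => ⟨hcH hh, hfo h hh⟩
  · obtain ⟨h, hh, hne⟩ := hno o ho
    exact ⟨h, hh, fun hk => hne hk.2⟩
  · intro h hh hhK y hy e
    have hmo : ap h o ≠ o := fun e => hhK ⟨hh, e⟩
    set S : Set ℝ := {z | (∃ k ∈ H, z = ap k o) ∧ z ≤ y} with hS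
    obtain ⟨k₀, hk₀, hk₀'⟩ := orbit_left H hm ha hb hno ho y hy
    have hne : ap k₀ o ∈ S := ⟨⟨k₀, hk₀, rfl⟩, hk₀'.2.le⟩
    have hup : ∀ z ∈ S, z ≤ y := fun z hz => hz.2
    have hlub : IsLUB S (sSup S) := Real.isLUB_sSup ⟨_, hne⟩ ⟨y, hup⟩
    set q := sSup S
    have hq : q ∈ Ioo a b := ⟨hk₀'.1.trans_le (hlub.1 hne), (hlub.2 hup).trans_lt hy.2⟩
    have aux : ∀ k ∈ H, ap k y = y → ∀ s ∈ S, ap k s ∈ S := by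
      rintro k hk e s ⟨⟨k', hk', rfl⟩, hs⟩
      refine ⟨⟨k' * k, H.mul_mem hk' hk, rfl⟩, ?_⟩
      rw [← e]
      exact (hm k hk).monotone hs
    have hhq : ap h q = q := fix_lub (hm h hh) hlub (aux h hh e)
      (aux _ (H.inv_mem hh) (ap_inv_fix e))
    have aux2 : ∀ g ∈ ⁅H, H⁆, ∀ s ∈ S, ap g s ∈ S := by
      rintro g hg s ⟨⟨k', hk', rfl⟩, hs⟩
      rw [hfixorb o ho hfo g (hcH hg) (hfo g hg) k' hk']
      exact ⟨⟨k', hk', rfl⟩, hs⟩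
    have hfq : ∀ g ∈ ⁅H, H⁆, ap g q = q := fun g hg =>
      fix_lub (hm g (hcH hg)) hlub (aux2 g hg) (aux2 _ (Subgroup.inv_mem _ hg))
    have f1 := orbit_freq_left H hm ha hb hno hq (P := fun y => ap h y = y)
      (hfixorb q hq hfq h hh hhq)
    have f2 := orbit_freq_left H hm ha hb hno ho (P := fun y => ap h y ≠ y) (by
      intro m' hm' e
      rw [comm_at _ hfo hh hm'] at e
      exact hmo (ap_inj _ e))
    rcases germ_dichotomy (hgR h hh) (ne_nhdsGT a) with h3 | h3
    · exact f2 (by filter_upwards [h3] with y hy; simpa using hy)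
    · exact f1 h3
  · intro y hy
    obtain ⟨k₀, hk₀, hk₀'⟩ := orbit_left H hm ha hb hno ho y hy
    exact ⟨_, hk₀', fun k hk => hfixorb o ho hfo k hk.1 hk.2 k₀ hk₀⟩
  · intro y hy
    obtain ⟨k₀, hk₀, hk₀'⟩ := orbit_right H hm ha hb hno ho y hy
    exact ⟨_, hk₀', fun k hk => hfixorb o ho hfo k hk.1 hk.2 k₀ hk₀⟩
  · intro k hk
    have f1 := orbit_freq_right H hm ha hb hno ho (P := fun y => ap k y = y)
      (hfixorb o ho hfo k hk.1 hk.2)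
    rcases germ_dichotomy (hgL k hk.1) (ne_nhdsLT b) with h3 | h3
    · exact h3
    · exact absurd h3 f1

/-- Not every breakpoint orbit can meet the orbital `(c,d)` of `K`. -/
theorem exists_outside (H K : Subgroup PermR) (hPL : ∀ h ∈ H, IsPL h) (hsol : ∃ n, D H n = ⊥)
    {a b c d : ℝ} (h0 : 0 ≤ a) (h1 : b ≤ 1)
    (ha : ∀ h ∈ H, ap h a = a) (hb : ∀ h ∈ H, ap h b = b)
    (hKH : K ≤ H) (hcK : ⁅H, H⁆ ≤ K) (hac : a < c) (hcd : c < d) (hdb : d < b)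
    (hc : ∀ h ∈ K, ap h c = c) (hd : ∀ h ∈ K, ap h d = d)
    (hno : ∀ y ∈ Ioo c d, ∃ h ∈ K, ap h y ≠ y)
    (hall : ∀ h ∈ H, ∀ z ∈ Ioo a b, z ∈ Breakpoints h → ∃ k ∈ H, ap k z ∈ Ioo c d) : False := by
  have hconj : ∀ h ∈ H, ∀ k ∈ K, h * k * h⁻¹ ∈ K := by
    intro h hh k hk
    have e : h * k * h⁻¹ = ⁅h, k⁆ * k := by rw [commutatorElement_def]; group
    rw [e]
    exact K.mul_mem (hcK (Subgroup.commutator_mem_commutator hh (hKH hk))) hk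
  -- translates of points fixed by `K` are fixed by `K`
  have hfixt : ∀ x, (∀ k ∈ K, ap k x = x) → ∀ h ∈ H, ∀ k ∈ K, ap k (ap h x) = ap h x := by
    intro x hx h hh k hk
    have := hx _ (hconj h hh k hk)
    rw [ap_mul, ap_mul] at this
    have h2 := congrArg (ap h) this
    rwa [ap_ap_inv] at h2
  have hm : ∀ h ∈ H, StrictMono (ap h) := fun h hh => (hPL h hh).1
  have hnotC : ∀ h ∈ H, ap h c ∉ Ioo c d := by
    intro h hh hmem
    obtain ⟨k, hk, hne⟩ := hno _ hmem
    exact hne (hfixt c hc h hh k hk)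
  obtain ⟨K₂, hK₂, -, ⟨f, hfK, hfK₂⟩, hfree, -, -, htr⟩ := key_lemma K (fun h hh => hPL h (hKH hh))
    (by obtain ⟨n, hn⟩ := hsol; exact ⟨n, by rw [eq_bot_iff, ← hn]; exact D_mono hKH n⟩)
    (h0.trans hac.le) hcd (hdb.le.trans h1) hc hd hno
  have hfH := hKH hfK
  have hfPL := hPL f hfH
  have descent : ∀ n : ℕ, ∀ h ∈ H, (∀ y ∈ Ioo c d, ap f (ap h y) ≠ ap h y) →
      (Breakpoints f ∩ Iio (ap h c)).ncard = n → False := by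
    intro n
    induction n using Nat.strong_induction_on with
    | _ n ih =>
    intro h hh hmv hcard
    set t := ap h c with ht
    have htab : t ∈ Ioo a b := ap_lt_of (hm h hh) (ha h hh) (hb h hh) ⟨hac, hcd.trans hdb⟩
    have hft : ap f t = t := hfixt c hc h hh f hfK
    have htnb : t ∉ Breakpoints f := by
      intro htb
      obtain ⟨k, hk, hkt⟩ := hall f hfH t htab htb
      exact hnotC (h * k) (H.mul_mem hh hk) hkt
    have hloc : IsLocallyAffineAt f t := by
      by_contra hn
      exact htnb ⟨⟨h0.trans_lt htab.1, htab.2.trans_le h1⟩, hn⟩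
    obtain ⟨m, b', hmb⟩ := hloc
    have e0 := hmb.self_of_nhds
    rw [hft] at e0
    have htd : t < ap h d := hm h hh hcd
    have hm1 : m ≠ 1 := by
      rintro rfl
      have hev : ∀ᶠ y in 𝓝[>] t, False := by
        filter_upwards [hmb.filter_mono nhdsWithin_le_nhds, Ioo_mem_nhdsGT htd] with y e hy
        refine hmv (ap h⁻¹ y) ?_ ?_
        · have hmi := hm _ (H.inv_mem hh)
          have q1 := hmi hy.1
          have q2 := hmi hy.2
          rw [ap_inv_ap] at q1 q2
          exact ⟨q1, q2⟩
        · rw [ap_ap_inv, e]; linarith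
      exact hev.exists.elim fun _ h => h
    obtain ⟨u, hu, husub⟩ := mem_nhdsLT_iff_exists_Ioo_subset.1
      (hmb.filter_mono nhdsWithin_le_nhds : ∀ᶠ y in 𝓝[<] t, ap f y = m * y + b')
    have hu : u < t := hu
    have hmoved : ∀ y ∈ Ioo u t, ap f y ≠ y := by
      intro y hy e
      have e1 : ap f y = m * y + b' := husub hy
      rw [e] at e1
      have : (m - 1) * (t - y) = 0 := by linarith
      rcases mul_eq_zero.1 this with h | h
      · exact hm1 (by linarith)
      · linarith [hy.2]
    have hx0 : (u + t) / 2 ∈ Ioo u t := ⟨by linarith, by linarith⟩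
    obtain ⟨p, q, hp0, hq1, hxpq, hp, hq, hpq⟩ := exists_orbital {f} (by simpa using hfPL)
      (x := (u + t) / 2) ⟨f, rfl, hmoved _ hx0⟩
    have hp := hp f rfl
    have hq := hq f rfl
    have hpq : ∀ y ∈ Ioo p q, ap f y ≠ y := by
      intro y hy
      obtain ⟨g, hg, e⟩ := hpq y hy
      rwa [mem_singleton_iff.1 hg] at e
    have hqt : q = t := by
      apply le_antisymm
      · by_contra hlt
        exact hpq t ⟨hxpq.1.trans hx0.2, not_le.1 hlt⟩ hft
      · by_contra hlt
        exact hmoved q ⟨hx0.1.trans hxpq.2, not_le.1 hlt⟩ hq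
    clear_value t
    subst hqt
    have hpt : p < q := hxpq.1.trans hxpq.2
    have hap : a ≤ p := by
      by_contra hlt
      exact hpq a ⟨not_le.1 hlt, htab.1⟩ (ha f hfH)
    obtain ⟨z, hz, hzb⟩ : ∃ z ∈ Ioo p q, z ∈ Breakpoints f := by
      by_contra hcon
      push Not at hcon
      exact hpq _ hxpq (no_break hfPL hp0 hq1 hpt hcon hp hq _ hxpq)
    obtain ⟨k, hk, hkz⟩ := hall f hfH z ⟨hap.trans_lt hz.1, hz.2.trans htab.2⟩ hzb
    have hk' := H.inv_mem hk
    have hz1 : ap k⁻¹ c < z := by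
      have := hm _ hk' hkz.1
      rwa [ap_inv_ap] at this
    have hz2 : z < ap k⁻¹ d := by
      have := hm _ hk' hkz.2
      rwa [ap_inv_ap] at this
    have hdt : ap k⁻¹ d = q := by
      apply le_antisymm
      · by_contra hlt
        push Not at hlt
        have := hnotC (h * k) (H.mul_mem hh hk)
        rw [ap_mul, ← ht] at this
        refine this ⟨hkz.1.trans (hm k hk hz.2), ?_⟩
        have h3 := hm k hk hlt
        rwa [ap_ap_inv] at h3
      · by_contra hlt
        push Not at hlt
        exact hpq _ ⟨hz.1.trans hz2, hlt⟩ (hfixt d hd _ hk' f hfK)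
    refine ih (Breakpoints f ∩ Iio (ap k⁻¹ c)).ncard ?_ k⁻¹ hk' ?_ rfl
    · rw [← hcard]
      apply Set.ncard_lt_ncard _ (hfPL.2.2.subset inter_subset_left)
      rw [Set.ssubset_iff_of_subset]
      · exact ⟨z, ⟨hzb, hz.2⟩, fun hz' => absurd hz'.2 (not_lt.2 hz1.le)⟩
      · rintro w ⟨hw1, hw2⟩
        exact ⟨hw1, (show w < _ from hw2).trans (hz1.trans hz.2)⟩
    · intro y hy e
      set g := k⁻¹ * f * k with hgdef
      have hgK : g ∈ K := by
        have := hconj _ hk' f hfK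
        rwa [inv_inv] at this
      have hgy : ap g y = y := by
        rw [hgdef, ap_mul, ap_mul, e, ap_ap_inv]
      have hgK₂ : g ∈ K₂ := by
        by_contra hn
        exact hfree g hgK hn y hy hgy
      have hkp : ap k p < d := by
        have h3 := hm k hk hpt
        rwa [← hdt, ap_ap_inv] at h3
      obtain ⟨w, hw1, hw2⟩ := ((htr g hgK₂).and (Ioo_mem_nhdsLT hkp)).exists
      have hw3 := hm _ hk' hw2.1
      have hw4 := hm _ hk' hw2.2
      rw [ap_inv_ap] at hw3
      rw [hdt] at hw4
      refine hpq _ ⟨hw3, hw4⟩ ?_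
      rw [hgdef, ap_mul, ap_mul] at hw1
      have h3 := congrArg (ap k⁻¹) hw1
      rwa [ap_inv_ap] at h3
  exact descent _ 1 H.one_mem (fun y hy => hfree f hfK hfK₂ y hy) rfl

theorem main_ind (r : ℕ) : ∀ (H : Subgroup PermR), (∀ h ∈ H, IsPL h) → (∃ n, D H n = ⊥) →
    ∀ a b : ℝ, 0 ≤ a → a < b → b ≤ 1 → (∀ h ∈ H, ap h a = a) → (∀ h ∈ H, ap h b = b) →
    ∀ S : Finset ℝ, S.card ≤ r →
    (∀ h ∈ H, ∀ z ∈ Ioo a b, z ∈ Breakpoints h → ∃ s ∈ S, ∃ k ∈ H, z = ap k s) →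
    ∀ g ∈ D H r, ∀ x ∈ Ioo a b, ap g x = x := by
  classical
  induction r with
  | zero =>
    intro H hPL _ a b h0 hab h1 ha hb S hS hcov g hg x hx
    have hS : S = ∅ := by simpa using hS
    have hg : g ∈ H := hg
    refine no_break (hPL g hg) h0 h1 hab ?_ (ha g hg) (hb g hg) x hx
    intro y hy hyb
    obtain ⟨s, hs, -⟩ := hcov g hg y hy hyb
    simp [hS] at hs
  | succ r ih =>
    intro H hPL hsol a b h0 hab h1 ha hb S hS hcov g hg x hx
    by_cases hxm : ∃ h ∈ (H : Set PermR), ap h x ≠ x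
    swap
    · push Not at hxm
      exact hxm g (D_le H _ hg)
    obtain ⟨p, q, hp0, hq1, hxpq, hp, hq, hpq⟩ := exists_orbital (H : Set PermR) hPL hxm
    have hm : ∀ h ∈ H, StrictMono (ap h) := fun h hh => (hPL h hh).1
    have hap : a ≤ p := by
      by_contra hlt
      obtain ⟨h, hh, e⟩ := hpq a ⟨not_le.1 hlt, hx.1.trans hxpq.2⟩
      exact e (ha h hh)
    have hqb : q ≤ b := by
      by_contra hlt
      obtain ⟨h, hh, e⟩ := hpq b ⟨hxpq.1.trans hx.2, not_le.1 hlt⟩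
      exact e (hb h hh)
    obtain ⟨K, hKH, hcK, -, hfree, hleft, hright, -⟩ :=
      key_lemma H hPL hsol hp0 (hxpq.1.trans hxpq.2) hq1 hp hq hpq
    have hgK : g ∈ D K r := D_shift hcK r hg
    by_cases hxK : ∃ h ∈ (K : Set PermR), ap h x ≠ x
    swap
    · push Not at hxK
      exact hxK g (D_le K _ hgK)
    obtain ⟨c, d, hc0, hd1, hxcd, hc, hd, hcd⟩ :=
      exists_orbital (K : Set PermR) (fun h hh => hPL h (hKH hh)) hxK
    have hpc : p < c := by
      obtain ⟨o, ho, hfo⟩ := hleft x hxpq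
      by_contra hlt
      obtain ⟨h, hh, e⟩ := hcd o ⟨(not_lt.1 hlt).trans_lt ho.1, ho.2.trans hxcd.2⟩
      exact e (hfo h hh)
    have hdq : d < q := by
      obtain ⟨o, ho, hfo⟩ := hright x hxpq
      by_contra hlt
      obtain ⟨h, hh, e⟩ := hcd o ⟨hxcd.1.trans ho.1, ho.2.trans_le (not_lt.1 hlt)⟩
      exact e (hfo h hh)
    have hcd' : c < d := hxcd.1.trans hxcd.2
    -- some orbit misses `(c,d)`
    obtain ⟨s₀, hs₀, hs₀'⟩ : ∃ s ∈ S, ¬ ∃ h ∈ H, ap h s ∈ Ioo c d := by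
      by_contra hcon
      push Not at hcon
      refine exists_outside H K hPL hsol hp0 hq1 hp hq hKH hcK hpc hcd' hdq hc hd hcd ?_
      intro h hh z hz hzb
      obtain ⟨s, hs, k, hk, rfl⟩ := hcov h hh z ⟨hap.trans_lt hz.1, hz.2.trans_le hqb⟩ hzb
      obtain ⟨k', hk', hmem⟩ := hcon s hs
      refine ⟨k⁻¹ * k', H.mul_mem (H.inv_mem hk) hk', ?_⟩
      rwa [ap_mul, ap_inv_ap]
    set T := S.filter (fun s => ∃ h ∈ H, ap h s ∈ Ioo c d) with hT
    have hTcard : T.card ≤ r := by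
      have : T.card < S.card := Finset.card_lt_card (by
        rw [Finset.ssubset_iff_of_subset (Finset.filter_subset _ _)]
        exact ⟨s₀, hs₀, fun h => hs₀' (Finset.mem_filter.1 h).2⟩)
      omega
    have hch : ∀ s, ∃ k, (∃ h ∈ H, ap h s ∈ Ioo c d) → k ∈ H ∧ ap k s ∈ Ioo c d := by
      intro s
      by_cases hs : ∃ h ∈ H, ap h s ∈ Ioo c d
      · obtain ⟨h, hh, e⟩ := hs
        exact ⟨h, fun _ => ⟨hh, e⟩⟩
      · exact ⟨1, fun h => absurd h hs⟩
    choose φ hφ using hch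
    refine ih K (fun h hh => hPL h (hKH hh))
      (by obtain ⟨n, hn⟩ := hsol; exact ⟨n, by rw [eq_bot_iff, ← hn]; exact D_mono hKH n⟩)
      c d hc0 hcd' hd1 hc hd (T.image fun s => ap (φ s) s) (Finset.card_image_le.trans hTcard)
      ?_ g hgK x hxcd
    intro h hh z hz hzb
    obtain ⟨s, hs, k, hk, rfl⟩ := hcov h (hKH hh) z
      ⟨hap.trans_lt (hpc.trans hz.1), (hz.2.trans hdq).trans_le hqb⟩ hzb
    have hsT : ∃ h ∈ H, ap h s ∈ Ioo c d := ⟨k, hk, hz⟩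
    obtain ⟨f1, f2⟩ := hφ s hsT
    refine ⟨ap (φ s) s, Finset.mem_image.2 ⟨s, Finset.mem_filter.2 ⟨hs, hsT⟩, rfl⟩,
      (φ s)⁻¹ * k, ?_, by rw [ap_mul, ap_inv_ap]⟩
    -- the element moves `(c,d)` to itself
    set τ := (φ s)⁻¹ * k with hτ
    have hτH : τ ∈ H := H.mul_mem (H.inv_mem f1) hk
    have hτm : ap τ (ap (φ s) s) = ap k s := by rw [hτ, ap_mul, ap_inv_ap]
    have hnorm : ∀ h ∈ H, ap h c ∉ Ioo c d := by
      intro h hh hmem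
      obtain ⟨k, hk, hne⟩ := hcd _ hmem
      apply hne
      have hk : k ∈ K := hk
      have e : h * k * h⁻¹ = ⁅h, k⁆ * k := by rw [commutatorElement_def]; group
      have hmemK : h * k * h⁻¹ ∈ K := by
        rw [e]
        exact K.mul_mem (hcK (Subgroup.commutator_mem_commutator hh (hKH hk))) hk
      have := hc _ hmemK
      rw [ap_mul, ap_mul] at this
      have h2 := congrArg (ap h) this
      rwa [ap_ap_inv] at h2
    have hτc : ap τ c = c := by
      apply le_antisymm
      · by_contra hlt
        refine hnorm τ hτH ⟨not_le.1 hlt, ?_⟩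
        have := hm τ hτH f2.1
        rw [hτm] at this
        exact this.trans hz.2
      · by_contra hlt
        push Not at hlt
        have hi := H.inv_mem hτH
        have h3 := hm _ hi hlt
        rw [ap_inv_ap] at h3
        refine hnorm τ⁻¹ hi ⟨h3, ?_⟩
        have h4 := hm _ hi hz.1
        rw [← hτm, ap_inv_ap] at h4
        exact h4.trans f2.2
    by_contra hτK
    exact hfree τ hτH hτK c ⟨hpc, hcd'.trans hdq⟩ hτc

theorem statement1 (X : Set PermR) (hXfin : X.Finite)
    (G : Subgroup PermR) (hG : G = Subgroup.closure X)
    (hPL : ∀ g ∈ G, IsPL g) (hsol : IsSolvable ↥G) :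
    derivedLength ↥G ≤ (BreakSet X).ncard := by
  have hB : (BreakSet X).Finite := by
    refine hXfin.biUnion fun g hg => ?_
    exact (hPL g (hG ▸ Subgroup.subset_closure hg)).2.2
  apply Nat.sInf_le
  show derivedSeries G _ = ⊥
  rw [← Subgroup.map_eq_bot_iff_of_injective _ G.subtype_injective, map_derivedSeries_eq_D]
  have hsol' : ∃ n, D G n = ⊥ := by
    obtain ⟨n, hn⟩ := hsol.solvable
    refine ⟨n, ?_⟩
    rw [← map_derivedSeries_eq_D, hn, Subgroup.map_bot]
  rw [eq_bot_iff]
  intro g hg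
  have hgG : g ∈ G := D_le G _ hg
  rw [Subgroup.mem_bot]
  apply ap_ext
  intro x
  rw [ap_one]
  by_cases hx : x ∈ Ioo (0:ℝ) 1
  · refine main_ind (BreakSet X).ncard G hPL hsol' 0 1 le_rfl one_pos le_rfl
      (fun h hh => (hPL h hh).2.1 0 (by simp)) (fun h hh => (hPL h hh).2.1 1 (by simp))
      hB.toFinset ?_ ?_ g hg x hx
    · rw [Set.ncard_eq_toFinset_card _ hB]
    · intro h hh z _ hz
      subst hG
      obtain ⟨s, hs, k, hk, e⟩ := break_closure X hPL h hh z hz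
      exact ⟨s, by simpa using hs, k, hk, e⟩
  · exact (hPL g hgG).2.1 x hx

end PLPaper
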